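/- Let (v₁,w₁), (v₂,w₂), …, (v_k,w_k) be a list of pairs of words over the digit alphabet {1,2}, and let B_i = A(v_i,w_i). Then for every nonempty sequence a₁, a₂, …, a_m of indices in {1,…,k}, with e₁ = (1,0,0,0,0,0) and f₁ = (1,0,0,−1,−1,−1), one has e₁ᵀ·B_{a₁}·B_{a₂}⋯B_{a_m}·f₁ > 0 if and only if the concatenations agree: v_{a₁}v_{a₂}⋯v_{a_m} = w_{a₁}w_{a₂}⋯w_{a_m}. In other words, the positive matrix products characterize exactly the solutions of the Post Correspondence Problem instance (v₁,w₁),…,(v_k,w_k). -/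

import Mathlib

/-!
The map `(v, w) ↦ A(v, w)` is a monoid homomorphism: since `(vv')₃ = (v)₃ · 3^|v'| + (v')₃`, one has
`A(vv', ww') = A(v, w) * A(v', w')` (`matA_append`). Hence the matrix product in the theorem is
`A(V, W)`, where `V` and `W` are the two concatenations (`prod_matA`), and
`e₁ᵀ A(V, W) f₁ = 1 - ((V)₃ - (W)₃)²` (`e₁_matA_f₁`). An integer of this form is positive exactly
when `(V)₃ = (W)₃`, which means `V = W`: base-3 numerals with digits in `{1, 2}` are determined by
their value, as no digit is zero (`val3_injective`).
-/

open Matrix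

/-- The base-3 value `(v)₃` of a word over the digit alphabet `{1,2}`
(`false` representing the digit `1`, `true` the digit `2`), most significant
digit first. -/
def val3 (v : List Bool) : ℕ :=
  v.foldl (fun a b => 3 * a + (if b then 2 else 1)) 0

/-- The 6×6 integer matrix `A(v,w)` of Claus. -/
def matA (v w : List Bool) : Matrix (Fin 6) (Fin 6) ℤ :=
  !![1, -2 * (val3 v : ℤ), 2 * (val3 w : ℤ), (val3 v : ℤ)^2, (val3 w : ℤ)^2,
        -2 * (val3 v : ℤ) * (val3 w : ℤ);
     0, 3^v.length, 0, -(val3 v : ℤ) * 3^v.length, 0, (val3 w : ℤ) * 3^v.length;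
     0, 0, 3^w.length, 0, (val3 w : ℤ) * 3^w.length, -(val3 v : ℤ) * 3^w.length;
     0, 0, 0, 3^(2 * v.length), 0, 0;
     0, 0, 0, 0, 3^(2 * w.length), 0;
     0, 0, 0, 0, 0, 3^(v.length + w.length)]

/-- The starting vector `e₁`. -/
def e₁ : Fin 6 → ℤ := ![1, 0, 0, 0, 0, 0]

/-- The ending vector `f₁`. -/
def f₁ : Fin 6 → ℤ := ![1, 0, 0, -1, -1, -1]

lemma val3_concat (v : List Bool) (b : Bool) :
    val3 (v ++ [b]) = 3 * val3 v + (if b then 2 else 1) := by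
  simp [val3]

lemma val3_append (v w : List Bool) :
    val3 (v ++ w) = val3 v * 3 ^ w.length + val3 w := by
  induction w using List.reverseRecOn with
  | nil => simp [val3]
  | append_singleton w b ih =>
    rw [← List.append_assoc, val3_concat, val3_concat, ih, List.length_append,
      List.length_singleton]
    ring

/-- The last digit is recovered from the value modulo 3; the absence of the digit `0` also rules
out leading zeros, so words of different lengths have different values. -/
lemma val3_injective : Function.Injective val3 := by
  intro v
  induction v using List.reverseRecOn with
  | nil =>
    intro w h
    induction w using List.reverseRecOn with
    | nil => rfl
    | append_singleton w c _ =>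
      rw [val3_concat] at h
      cases c <;> simp [val3] at h
  | append_singleton v b ih =>
    intro w h
    induction w using List.reverseRecOn with
    | nil =>
      rw [val3_concat] at h
      cases b <;> simp [val3] at h
    | append_singleton w c _ =>
      rw [val3_concat, val3_concat] at h
      have hbc : b = c := by
        cases b <;> cases c <;> simp at h ⊢ <;> omega
      subst hbc
      rw [ih (show val3 v = val3 w by omega)]

lemma matA_nil : matA [] [] = 1 := by
  ext i j
  fin_cases i <;> fin_cases j <;> simp [matA, val3]

lemma matA_append (v v' w w' : List Bool) :
    matA (v ++ v') (w ++ w') = matA v w * matA v' w' := by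
  ext i j
  fin_cases i <;> fin_cases j <;>
    simp [matA, Matrix.mul_apply, Fin.sum_univ_succ, val3_append] <;> ring

lemma prod_matA {k : ℕ} (P : Fin k → List Bool × List Bool) (a : List (Fin k)) :
    (a.map fun i => matA (P i).1 (P i).2).prod =
      matA (a.map fun i => (P i).1).flatten (a.map fun i => (P i).2).flatten := by
  induction a with
  | nil => simp [matA_nil]
  | cons i a ih => simp [matA_append, ih]

lemma e₁_matA_f₁ (v w : List Bool) :
    e₁ ⬝ᵥ (matA v w *ᵥ f₁) = 1 - ((val3 v : ℤ) - val3 w) ^ 2 := by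
  simp [e₁, f₁, matA, Matrix.mulVec, dotProduct, Fin.sum_univ_succ]
  ring

/-- For a PCP instance given by word pairs `P i = (v_i, w_i)` over `{1,2}` and
`B_i = A(v_i,w_i)`, a nonempty index sequence `a` satisfies
`e₁ᵀ·B_{a₁}⋯B_{a_m}·f₁ > 0` iff the two concatenations agree, i.e. iff `a`
is a solution of the Post Correspondence Problem instance. -/
theorem matA_PCP (k : ℕ) (P : Fin k → List Bool × List Bool)
    (a : List (Fin k)) (ha : a ≠ []) :
    0 < e₁ ⬝ᵥ ((a.map fun i => matA (P i).1 (P i).2).prod *ᵥ f₁)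
      ↔ (a.map fun i => (P i).1).flatten = (a.map fun i => (P i).2).flatten := by
  rw [prod_matA, e₁_matA_f₁, ← val3_injective.eq_iff]
  constructor
  · intro h
    -- An integer whose square is less than 1 vanishes.
    have h0 : ((val3 (a.map fun i => (P i).1).flatten : ℤ)
        - val3 (a.map fun i => (P i).2).flatten) = 0 := by
      by_contra hne
      have := Int.one_le_abs hne
      nlinarith [sq_abs ((val3 (a.map fun i => (P i).1).flatten : ℤ)
        - val3 (a.map fun i => (P i).2).flatten)]
    omega
  · intro h
    simp [h]
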